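/- Let G be a graph on n vertices with maximum degree Δ and minimum degree δ, let G̅ be the complement of G, and let 0 ≤ α ≤ 1. Then for every k with 1 ≤ k ≤ n, (1−α)n + (αn−1)k ≤ S_k(A_α(G)) + S_k(A_α(G̅)) ≤ k·[ (2−α)n + α(Δ−δ−1) − (1−α)(k+1) ]. -/

import Mathlib

open Matrix Finset Real

/-- The `A_α`-matrix of a graph: `A_α(G) = α·D(G) + (1−α)·A(G)`. -/
noncomputable def Aalpha {n : ℕ} (α : ℝ) (G : SimpleGraph (Fin n)) [DecidableRel G.Adj] :
    Matrix (Fin n) (Fin n) ℝ :=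
  α • Matrix.diagonal (fun i => (G.degree i : ℝ)) + (1 - α) • G.adjMatrix ℝ

/-- The sum of the `k` largest eigenvalues of a real symmetric matrix, expressed as
the supremum over all `k`-subsets of indices of the corresponding eigenvalue sums. -/
noncomputable def Sk {n : ℕ} (M : Matrix (Fin n) (Fin n) ℝ) (k : ℕ) : ℝ :=
  if h : M.IsHermitian then
    sSup {x : ℝ | ∃ s : Finset (Fin n), s.card = k ∧ x = ∑ i ∈ s, h.eigenvalues i}
  else 0

lemma spec_exists {n : ℕ} (M : Matrix (Fin n) (Fin n) ℝ) (h : M.IsHermitian) :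
    ∃ u : Fin n → Fin n → ℝ,
      (∀ i j, ∑ a, u i a * u j a = if i = j then 1 else 0) ∧
      (∀ a b, ∑ i, u i a * u i b = if a = b then 1 else 0) ∧
      (∀ a b, M a b = ∑ i, h.eigenvalues i * (u i a * u i b)) ∧
      (∀ i, h.eigenvalues i = ∑ a, ∑ b, M a b * (u i a * u i b)) := by
  let U : Matrix (Fin n) (Fin n) ℝ := (h.eigenvectorUnitary : Matrix (Fin n) (Fin n) ℝ)
  have h1 : star U * U = 1 := Unitary.coe_star_mul_self h.eigenvectorUnitary
  have h2 : U * star U = 1 := Unitary.coe_mul_star_self h.eigenvectorUnitary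
  have h3 : M = U * diagonal h.eigenvalues * star U := by
    have := h.spectral_theorem
    rw [Unitary.conjStarAlgAut_apply] at this
    simpa using this
  have e1 : ∀ i j, ∑ a, U a i * U a j = if i = j then 1 else 0 := by
    intro i j
    have := congrFun (congrFun h1 i) j
    simpa [Matrix.mul_apply, Matrix.one_apply, Matrix.star_apply] using this
  have e2 : ∀ a b, ∑ i, U a i * U b i = if a = b then 1 else 0 := by
    intro i j
    have := congrFun (congrFun h2 i) j
    simpa [Matrix.mul_apply, Matrix.one_apply, Matrix.star_apply] using this
  have e3 : ∀ a b, M a b = ∑ i, h.eigenvalues i * (U a i * U b i) := by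
    intro i j
    have := congrFun (congrFun h3 i) j
    rw [this, Matrix.mul_apply]
    refine Finset.sum_congr rfl fun x _ => ?_
    rw [Matrix.mul_diagonal, Matrix.star_apply, star_trivial]
    ring
  refine ⟨fun i a => U a i, e1, e2, e3, fun i => ?_⟩
  have e4 : star U * M * U = diagonal h.eigenvalues := by
    have : star U * M * U = (star U * U) * diagonal h.eigenvalues * (star U * U) := by
      conv_lhs => rw [h3]
      simp only [Matrix.mul_assoc]
    rw [this, h1]; simp
  have := congrFun (congrFun e4 i) i
  rw [Matrix.diagonal_apply_eq, Matrix.mul_apply] at this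
  rw [← this, Finset.sum_comm]
  refine Finset.sum_congr rfl fun b _ => ?_
  rw [Matrix.mul_apply, Finset.sum_mul]
  refine Finset.sum_congr rfl fun a _ => ?_
  rw [Matrix.star_apply, star_trivial]
  ring

lemma kyfan_comb {n : ℕ} (l p : Fin n → ℝ) (k : ℕ) (hkn : k ≤ n)
    (h0 : ∀ i, 0 ≤ p i) (h1 : ∀ i, p i ≤ 1) (hs : ∑ i, p i = k) :
    ∃ s : Finset (Fin n), s.card = k ∧ ∑ i, l i * p i ≤ ∑ i ∈ s, l i := by
  have hne : (Finset.powersetCard k (Finset.univ : Finset (Fin n))).Nonempty := by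
    apply Finset.powersetCard_nonempty.2; simpa using hkn
  obtain ⟨s, hsm, hmax⟩ := Finset.exists_max_image _ (fun s => ∑ i ∈ s, l i) hne
  have hcard : s.card = k := (Finset.mem_powersetCard.1 hsm).2
  refine ⟨s, hcard, ?_⟩
  have hex : ∀ i ∈ s, ∀ j ∉ s, l j ≤ l i := by
    intro i hi j hj
    have hj' : j ∉ s.erase i := fun h => hj (Finset.mem_of_mem_erase h)
    have := hmax (insert j (s.erase i)) (by
      rw [Finset.mem_powersetCard]
      refine ⟨Finset.subset_univ _, ?_⟩
      rw [Finset.card_insert_of_notMem hj', Finset.card_erase_add_one hi, hcard])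
    rw [Finset.sum_insert hj'] at this
    have h2 := Finset.add_sum_erase s l hi
    linarith
  obtain ⟨t, ht1, ht2⟩ : ∃ t : ℝ, (∀ i ∈ s, t ≤ l i) ∧ (∀ j ∉ s, l j ≤ t) := by
    by_cases hse : s.Nonempty
    · obtain ⟨i0, hi0, hmin⟩ := Finset.exists_min_image s l hse
      exact ⟨l i0, hmin, fun j hj => hex i0 hi0 j hj⟩
    · rw [Finset.not_nonempty_iff_eq_empty] at hse
      subst hse
      refine ⟨∑ j, |l j|, by simp, fun j _ => (le_abs_self _).trans ?_⟩
      exact Finset.single_le_sum (f := fun j => |l j|) (fun i _ => abs_nonneg _) (Finset.mem_univ j)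
  have key : ∀ i, l i * p i ≤ (if i ∈ s then l i else 0) + t * (p i - if i ∈ s then 1 else 0) := by
    intro i
    by_cases hi : i ∈ s
    · simp only [hi, if_true]; nlinarith [ht1 i hi, h1 i]
    · simp only [hi, if_false]; nlinarith [ht2 i hi, h0 i]
  have := Finset.sum_le_sum (fun i (_ : i ∈ Finset.univ) => key i)
  rw [Finset.sum_add_distrib, ← Finset.mul_sum, Finset.sum_sub_distrib, hs] at this
  simp [hcard] at this
  simpa using this

lemma Sk_lower {n : ℕ} (M : Matrix (Fin n) (Fin n) ℝ) (h : M.IsHermitian) (k : ℕ) (hkn : k ≤ n)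
    (hk1 : 1 ≤ k) (c : ℝ) (hc0 : 0 ≤ c) (hc1 : c ≤ 1) (hc : c * ((n : ℝ) - 1) = k - 1) :
    (1 - c) * ((∑ a, ∑ b, M a b) / n) + c * ∑ a, M a a ≤ Sk M k := by
  obtain ⟨u, e1, e2, e3, -⟩ := spec_exists M h
  have hn : (0 : ℝ) < n := by exact_mod_cast (by omega : 0 < n)
  let q : Fin n → ℝ := fun i => (∑ a, u i a) ^ 2 / n
  have hq0 : ∀ i, 0 ≤ q i := fun i => by positivity
  have hqs : ∑ i, q i = 1 := by
    simp only [q]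
    rw [← Finset.sum_div, div_eq_one_iff_eq hn.ne']
    simp only [sq, Finset.sum_mul_sum]
    rw [Finset.sum_comm]
    have : ∀ a, ∑ i, ∑ b, u i a * u i b = 1 := fun a => by
      rw [Finset.sum_comm]; simp [e2]
    simp [this]
  have hq1 : ∀ i, q i ≤ 1 := fun i => by
    rw [← hqs]; exact Finset.single_le_sum (fun i _ => hq0 i) (Finset.mem_univ i)
  obtain ⟨s, hs, hle⟩ := kyfan_comb h.eigenvalues (fun i => (1 - c) * q i + c) k hkn
    (fun i => by have := hq0 i; nlinarith [mul_nonneg (sub_nonneg.2 hc1) (hq0 i)])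
    (fun i => by nlinarith [mul_nonneg (sub_nonneg.2 hc1) (sub_nonneg.2 (hq1 i))])
    (by rw [Finset.sum_add_distrib, ← Finset.mul_sum, hqs]; simp; linarith)
  have hJ : (∑ a, ∑ b, M a b) / n = ∑ i, h.eigenvalues i * q i := by
    simp only [q]
    simp_rw [← mul_div_assoc]
    rw [← Finset.sum_div]
    congr 1
    have hx : ∀ i, h.eigenvalues i * (∑ a, u i a) ^ 2
        = ∑ a, ∑ b, h.eigenvalues i * (u i a * u i b) := fun i => by
      rw [sq, Finset.sum_mul_sum]; simp only [Finset.mul_sum]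
    simp only [hx, e3]
    conv_rhs => rw [Finset.sum_comm]
    exact Finset.sum_congr rfl fun a _ => Finset.sum_comm
  have hT : ∑ a, M a a = ∑ i, h.eigenvalues i := by
    simp only [e3]
    rw [Finset.sum_comm]
    simp [← Finset.mul_sum, e1]
  rw [hJ, hT, Sk, dif_pos h]
  have : (1 - c) * ∑ i, h.eigenvalues i * q i + c * ∑ i, h.eigenvalues i
      = ∑ i, h.eigenvalues i * ((1 - c) * q i + c) := by
    simp only [mul_add, Finset.sum_add_distrib, Finset.mul_sum]
    congr 1 <;> exact Finset.sum_congr rfl fun i _ => by ring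
  rw [this]
  refine hle.trans (le_csSup ?_ ⟨s, hs, rfl⟩)
  apply Set.Finite.bddAbove
  refine (Set.finite_range (fun s : Finset (Fin n) => ∑ i ∈ s, h.eigenvalues i)).subset ?_
  rintro x ⟨s, -, rfl⟩; exact ⟨s, rfl⟩

lemma Aalpha_herm {n : ℕ} (α : ℝ) (G : SimpleGraph (Fin n)) [DecidableRel G.Adj] :
    (Aalpha α G).IsHermitian := by
  unfold Aalpha
  ext i j
  simp [Matrix.diagonal_apply, Matrix.conjTranspose_apply, G.adj_comm, eq_comm]
  grind

lemma adj_bound {n : ℕ} (P A : Fin n → Fin n → ℝ) (k : ℝ) (hk1 : 1 ≤ k) (hkn : k ≤ n)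
    (hA0 : ∀ a, A a a = 0) (hA : ∀ a b, A a b ^ 2 ≤ if a = b then 0 else 1)
    (ht : ∑ a, P a a = k) (hP : ∑ a, ∑ b, P a b ^ 2 = k) :
    ∑ a, ∑ b, A a b * P a b ≤ k * (2 * n - k - 1) / 2 := by
  have hn : (0 : ℝ) < n := by linarith
  have hd : k ^ 2 ≤ n * ∑ a, P a a ^ 2 := by
    have := sq_sum_le_card_mul_sum_sq (s := (Finset.univ : Finset (Fin n))) (f := fun a => P a a)
    simpa [ht] using this
  let Q : Fin n × Fin n → ℝ := fun x => if x.1 = x.2 then 0 else P x.1 x.2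
  have hCS := Finset.sum_mul_sq_le_sq_mul_sq (Finset.univ : Finset (Fin n × Fin n))
    (fun x => A x.1 x.2) Q
  have hQ2 : ∑ x, Q x ^ 2 = k - ∑ a, P a a ^ 2 := by
    rw [Fintype.sum_prod_type, eq_sub_iff_add_eq, ← hP, ← Finset.sum_add_distrib]
    refine Finset.sum_congr rfl fun a _ => ?_
    have : P a a ^ 2 = ∑ b, if a = b then P a b ^ 2 else 0 := by simp
    rw [this, ← Finset.sum_add_distrib]
    refine Finset.sum_congr rfl fun b _ => ?_
    by_cases hab : a = b <;> simp [Q, hab]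
  have hA2 : ∑ x : Fin n × Fin n, A x.1 x.2 ^ 2 ≤ n * (n - 1) := by
    rw [Fintype.sum_prod_type]
    calc _ ≤ ∑ a : Fin n, ∑ b : Fin n, (1 - if a = b then (1 : ℝ) else 0) := by
          refine Finset.sum_le_sum fun a _ => Finset.sum_le_sum fun b _ => (hA a b).trans ?_
          split_ifs <;> norm_num
      _ = _ := by simp [Finset.sum_sub_distrib]; try ring
  have hAQ : ∑ x : Fin n × Fin n, A x.1 x.2 * Q x = ∑ a, ∑ b, A a b * P a b := by
    rw [Fintype.sum_prod_type]
    refine Finset.sum_congr rfl fun a _ => Finset.sum_congr rfl fun b _ => ?_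
    by_cases hab : a = b
    · subst hab; simp [Q, hA0]
    · simp [Q, hab]
  rw [hAQ, hQ2] at hCS
  set D := ∑ a, P a a ^ 2
  have hkD : 0 ≤ k - D := hQ2 ▸ Finset.sum_nonneg fun x _ => sq_nonneg _
  have hfin : (∑ a, ∑ b, A a b * P a b) ^ 2 ≤ (k * (2 * n - k - 1) / 2) ^ 2 := by
    have s1 := mul_le_mul_of_nonneg_right hA2 hkD
    have hn1 : (0 : ℝ) ≤ n - 1 := by linarith
    have s2 : (n : ℝ) * (n - 1) * (k - D) ≤ (n - 1) * (k * (n - k)) := by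
      nlinarith [mul_le_mul_of_nonneg_left hd hn1]
    have s3 : (n - 1) * (k * (n - k)) ≤ k * ((2 * n - k - 1) ^ 2 / 4) := by
      nlinarith [mul_nonneg (by linarith : (0 : ℝ) ≤ k) (sq_nonneg (k - 1))]
    have s4 : k * ((2 * n - k - 1) ^ 2 / 4) ≤ (k * (2 * n - k - 1) / 2) ^ 2 := by
      have : 0 ≤ k * (k - 1) * ((2 * n - k - 1) ^ 2 / 4) := by
        have : 0 ≤ k - 1 := by linarith
        positivity
      nlinarith
    linarith
  have h0 : 0 ≤ 2 * n - k - 1 := by linarith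
  exact (abs_le_of_sq_le_sq' hfin (by positivity)).2

lemma Sk_upper {n : ℕ} (α : ℝ) (hα0 : 0 ≤ α) (hα1 : α ≤ 1) (G : SimpleGraph (Fin n))
    [DecidableRel G.Adj] (k : ℕ) (hk1 : 1 ≤ k) (hkn : k ≤ n) (Δ : ℝ)
    (hΔ : ∀ i, (G.degree i : ℝ) ≤ Δ) :
    Sk (Aalpha α G) k ≤ k * (α * Δ + (1 - α) * ((2 * n - k - 1) / 2)) := by
  have h := Aalpha_herm α G
  rw [Sk, dif_pos h]
  apply csSup_le
  · obtain ⟨s, -, hs⟩ := Finset.exists_subset_card_eq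
      (s := (Finset.univ : Finset (Fin n))) (n := k) (by simpa using hkn)
    exact ⟨_, s, hs, rfl⟩
  rintro x ⟨s, hs, rfl⟩
  obtain ⟨u, e1, e2, -, e4⟩ := spec_exists _ h
  let P : Fin n → Fin n → ℝ := fun a b => ∑ i ∈ s, u i a * u i b
  have hPt : ∑ a, P a a = k := by
    simp only [P]; rw [Finset.sum_comm]; simp [e1, hs]
  have hP0 : ∀ a, 0 ≤ P a a := fun a => Finset.sum_nonneg fun i _ => mul_self_nonneg _
  have hP2 : ∑ a, ∑ b, P a b ^ 2 = k := by
    have : ∀ a b, P a b ^ 2 = ∑ i ∈ s, ∑ j ∈ s, (u i a * u j a) * (u i b * u j b) := by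
      intro a b
      simp only [P, sq, Finset.sum_mul_sum]
      exact Finset.sum_congr rfl fun i _ => Finset.sum_congr rfl fun j _ => by ring
    have h2 : ∑ a, ∑ b, P a b ^ 2
        = ∑ i ∈ s, ∑ j ∈ s, (∑ a, u i a * u j a) * (∑ b, u i b * u j b) := by
      simp only [this, Finset.sum_mul_sum]
      rw [Finset.sum_congr rfl fun a _ => Finset.sum_comm, Finset.sum_comm]
      refine Finset.sum_congr rfl fun i _ => ?_
      rw [Finset.sum_congr rfl fun a _ => Finset.sum_comm, Finset.sum_comm]
    rw [h2]
    simp [e1, hs]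
  have hsum : ∑ i ∈ s, h.eigenvalues i = ∑ a, ∑ b, Aalpha α G a b * P a b := by
    rw [Finset.sum_congr rfl fun i _ => e4 i, Finset.sum_comm]
    refine Finset.sum_congr rfl fun a _ => ?_
    rw [Finset.sum_comm]
    simp only [P, Finset.mul_sum]
  have hsplit : ∑ a, ∑ b, Aalpha α G a b * P a b
      = α * ∑ a, G.degree a * P a a + (1 - α) * ∑ a, ∑ b, G.adjMatrix ℝ a b * P a b := by
    simp only [Aalpha, Matrix.add_apply, Matrix.smul_apply, smul_eq_mul, add_mul,
      Finset.sum_add_distrib, Finset.mul_sum, Matrix.diagonal_apply]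
    congr 1
    · refine Finset.sum_congr rfl fun a _ => ?_
      simp [mul_assoc]
    · simp only [mul_assoc]
  have hb := adj_bound P (fun a b => G.adjMatrix ℝ a b) k (by exact_mod_cast hk1)
    (by exact_mod_cast hkn) (by simp) (by
      intro a b
      by_cases hab : a = b
      · subst hab; simp
      · simp only [SimpleGraph.adjMatrix_apply, hab, if_false]; split_ifs <;> norm_num) hPt hP2
  have hd : ∑ a, (G.degree a : ℝ) * P a a ≤ Δ * k := by
    rw [← hPt, Finset.mul_sum]
    exact Finset.sum_le_sum fun a _ => mul_le_mul_of_nonneg_right (hΔ a) (hP0 a)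
  rw [hsum, hsplit]
  have := mul_le_mul_of_nonneg_left hd hα0
  have := mul_le_mul_of_nonneg_left hb (sub_nonneg.2 hα1)
  linarith

lemma Aalpha_trace {n : ℕ} (α : ℝ) (G : SimpleGraph (Fin n)) [DecidableRel G.Adj] :
    ∑ a, Aalpha α G a a = α * ∑ a, (G.degree a : ℝ) := by
  simp [Aalpha, Finset.mul_sum]

lemma Aalpha_sum {n : ℕ} (α : ℝ) (G : SimpleGraph (Fin n)) [DecidableRel G.Adj] :
    ∑ a, ∑ b, Aalpha α G a b = ∑ a, (G.degree a : ℝ) := by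
  refine Finset.sum_congr rfl fun a _ => ?_
  have : ∑ b, G.adjMatrix ℝ a b = G.degree a := by
    simp [SimpleGraph.adjMatrix_apply, ← SimpleGraph.card_neighborFinset_eq_degree,
      SimpleGraph.neighborFinset_eq_filter]
  simp only [Aalpha, Matrix.add_apply, Matrix.smul_apply, smul_eq_mul,
      Finset.sum_add_distrib, ← Finset.mul_sum, this, Matrix.diagonal_apply]
  simp
  ring

lemma deg_compl {n : ℕ} (G : SimpleGraph (Fin n)) [DecidableRel G.Adj] [DecidableRel Gᶜ.Adj]
    (a : Fin n) : (Gᶜ.degree a : ℝ) = n - 1 - G.degree a := by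
  have h := G.degree_compl a
  have h1 := G.degree_lt_card_verts a
  simp only [Fintype.card_fin] at h h1
  have h2 : Gᶜ.degree a = n - 1 - G.degree a := by convert h
  have h3 : Gᶜ.degree a + 1 + G.degree a = n := by omega
  have h4 : (Gᶜ.degree a : ℝ) + 1 + G.degree a = n := by exact_mod_cast h3
  linarith

theorem stmt19 {n : ℕ} (G : SimpleGraph (Fin n)) [DecidableRel G.Adj] [DecidableRel Gᶜ.Adj]
    (α : ℝ) (hα0 : 0 ≤ α) (hα1 : α ≤ 1)
    (k : ℕ) (hk1 : 1 ≤ k) (hkn : k ≤ n) :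
    (1 - α) * n + (α * n - 1) * k ≤ Sk (Aalpha α G) k + Sk (Aalpha α Gᶜ) k ∧
      Sk (Aalpha α G) k + Sk (Aalpha α Gᶜ) k ≤
        (k : ℝ) * ((2 - α) * n + α * ((G.maxDegree : ℝ) - G.minDegree - 1)
          - (1 - α) * ((k : ℝ) + 1)) := by
  have hkR : (1 : ℝ) ≤ k := by exact_mod_cast hk1
  have hknR : (k : ℝ) ≤ n := by exact_mod_cast hkn
  constructor
  · obtain ⟨c, hc0, hc1, hc⟩ : ∃ c : ℝ, 0 ≤ c ∧ c ≤ 1 ∧ c * ((n : ℝ) - 1) = k - 1 := by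
      rcases (show (1 : ℝ) ≤ n by linarith).eq_or_lt with h | h
      · exact ⟨0, le_rfl, zero_le_one, by linarith⟩
      · have : (0 : ℝ) < n - 1 := by linarith
        exact ⟨(k - 1) / (n - 1), div_nonneg (by linarith) this.le,
          (div_le_one this).2 (by linarith), div_mul_cancel₀ _ this.ne'⟩
    have h1 := Sk_lower _ (Aalpha_herm α G) k hkn hk1 c hc0 hc1 hc
    have h2 := Sk_lower _ (Aalpha_herm α Gᶜ) k hkn hk1 c hc0 hc1 hc
    rw [Aalpha_trace, Aalpha_sum] at h1 h2
    have hn : (n : ℝ) ≠ 0 := by linarith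
    have hs : ∑ a, (Gᶜ.degree a : ℝ) = n * (n - 1) - ∑ a, (G.degree a : ℝ) := by
      simp [deg_compl, Finset.sum_sub_distrib]; try ring
    rw [hs] at h2
    refine le_trans (le_of_eq ?_) (add_le_add h1 h2)
    have : (n * ((n : ℝ) - 1) - ∑ a, (G.degree a : ℝ)) / n
        = (n - 1) - (∑ a, (G.degree a : ℝ)) / n := by field_simp
    rw [this]
    linear_combination (1 - α * n) * hc
  · have h1 := Sk_upper α hα0 hα1 G k hk1 hkn G.maxDegree
      (fun i => by exact_mod_cast G.degree_le_maxDegree i)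
    have h2 := Sk_upper α hα0 hα1 Gᶜ k hk1 hkn (n - 1 - G.minDegree)
      (fun i => by
        rw [deg_compl]
        have : (G.minDegree : ℝ) ≤ G.degree i := by exact_mod_cast G.minDegree_le_degree i
        linarith)
    refine (add_le_add h1 h2).trans (le_of_eq ?_)
    ring
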